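/- If there exists a Σ-structure that satisfies φ₁ and that has no {Q,P}-extension satisfying φ₂, then the tiling system 𝔇 has a solution. -/

import Mathlib

/-! Core: relational two-variable first-order logic with equality (unary and
binary predicates only), the guarded fragment GF², structures, satisfaction,
atomic types, (bounded/delimited) guarded bisimulations, forest structures. -/

namespace GFC

inductive Var : Type
  | x
  | y
deriving DecidableEq

/-- Formulas of two-variable relational FO with equality (variables `x`, `y`). -/
inductive Fml (U B : Type) : Type
  | uatom : U → Var → Fml U B
  | batom : B → Var → Var → Fml U B
  | eqv   : Var → Var → Fml U B
  | fls   : Fml U B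
  | neg   : Fml U B → Fml U B
  | conj  : Fml U B → Fml U B → Fml U B
  | disj  : Fml U B → Fml U B → Fml U B
  | impl  : Fml U B → Fml U B → Fml U B
  | all   : Var → Fml U B → Fml U B
  | ex    : Var → Fml U B → Fml U B

namespace Fml

variable {U B : Type}

def free : Fml U B → Set Var
  | uatom _ v => {v}
  | batom _ v w => {v, w}
  | eqv v w => {v, w}
  | fls => ∅
  | neg φ => φ.free
  | conj φ ψ => φ.free ∪ ψ.free
  | disj φ ψ => φ.free ∪ ψ.free
  | impl φ ψ => φ.free ∪ ψ.free
  | all v φ => φ.free \ {v}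
  | ex v φ => φ.free \ {v}

def IsSentence (φ : Fml U B) : Prop := φ.free = ∅

def upreds : Fml U B → Set U
  | uatom P _ => {P}
  | batom _ _ _ => ∅
  | eqv _ _ => ∅
  | fls => ∅
  | neg φ => φ.upreds
  | conj φ ψ => φ.upreds ∪ ψ.upreds
  | disj φ ψ => φ.upreds ∪ ψ.upreds
  | impl φ ψ => φ.upreds ∪ ψ.upreds
  | all _ φ => φ.upreds
  | ex _ φ => φ.upreds

def bpreds : Fml U B → Set B
  | uatom _ _ => ∅
  | batom R _ _ => {R}
  | eqv _ _ => ∅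
  | fls => ∅
  | neg φ => φ.bpreds
  | conj φ ψ => φ.bpreds ∪ ψ.bpreds
  | disj φ ψ => φ.bpreds ∪ ψ.bpreds
  | impl φ ψ => φ.bpreds ∪ ψ.bpreds
  | all _ φ => φ.bpreds
  | ex _ φ => φ.bpreds

def IsAtom : Fml U B → Prop
  | uatom _ _ => True
  | batom _ _ _ => True
  | eqv _ _ => True
  | _ => False

def IsEqAtom : Fml U B → Prop
  | eqv _ _ => True
  | _ => False

/-- guarded quantifier depth (in GF² formulas every quantifier is guarded) -/
def gdepth : Fml U B → ℕ
  | uatom _ _ => 0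
  | batom _ _ _ => 0
  | eqv _ _ => 0
  | fls => 0
  | neg φ => φ.gdepth
  | conj φ ψ => max φ.gdepth ψ.gdepth
  | disj φ ψ => max φ.gdepth ψ.gdepth
  | impl φ ψ => max φ.gdepth ψ.gdepth
  | all _ φ => φ.gdepth + 1
  | ex _ φ => φ.gdepth + 1

/-- subformulas (including the formula itself) -/
def Subf : Fml U B → Set (Fml U B)
  | uatom P v => {uatom P v}
  | batom R v w => {batom R v w}
  | eqv v w => {eqv v w}
  | fls => {fls}
  | neg φ => insert (neg φ) φ.Subf
  | conj φ ψ => insert (conj φ ψ) (φ.Subf ∪ ψ.Subf)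
  | disj φ ψ => insert (disj φ ψ) (φ.Subf ∪ ψ.Subf)
  | impl φ ψ => insert (impl φ ψ) (φ.Subf ∪ ψ.Subf)
  | all v φ => insert (all v φ) φ.Subf
  | ex v φ => insert (ex v φ) φ.Subf

/-- rename the free variables along `f` (bound variables untouched) -/
def renameFree : (Var → Var) → Fml U B → Fml U B
  | f, uatom P v => uatom P (f v)
  | f, batom R v w => batom R (f v) (f w)
  | f, eqv v w => eqv (f v) (f w)
  | _, fls => fls
  | f, neg φ => neg (renameFree f φ)
  | f, conj φ ψ => conj (renameFree f φ) (renameFree f ψ)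
  | f, disj φ ψ => disj (renameFree f φ) (renameFree f ψ)
  | f, impl φ ψ => impl (renameFree f φ) (renameFree f ψ)
  | f, all v φ => all v (renameFree (Function.update f v v) φ)
  | f, ex v φ => ex v (renameFree (Function.update f v v) φ)

end Fml

/-- The two-variable guarded fragment GF²: quantification only in the guarded
patterns `∀v (α → φ)` and `∃v (α ∧ φ)` with `α` an atom containing all free
variables of `φ` as well as the quantified variable `v`. -/
inductive IsGF2 {U B : Type} : Fml U B → Prop
  | uatom (P : U) (v : Var) : IsGF2 (.uatom P v)
  | batom (R : B) (v w : Var) : IsGF2 (.batom R v w)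
  | eqv (v w : Var) : IsGF2 (.eqv v w)
  | fls : IsGF2 .fls
  | neg {φ} : IsGF2 φ → IsGF2 (.neg φ)
  | conj {φ ψ} : IsGF2 φ → IsGF2 ψ → IsGF2 (.conj φ ψ)
  | disj {φ ψ} : IsGF2 φ → IsGF2 ψ → IsGF2 (.disj φ ψ)
  | impl {φ ψ} : IsGF2 φ → IsGF2 ψ → IsGF2 (.impl φ ψ)
  | allG {v : Var} {α φ : Fml U B} :
      α.IsAtom → IsGF2 φ → φ.free ∪ {v} ⊆ α.free → IsGF2 (.all v (.impl α φ))
  | exG {v : Var} {α φ : Fml U B} :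
      α.IsAtom → IsGF2 φ → φ.free ∪ {v} ⊆ α.free → IsGF2 (.ex v (.conj α φ))

/-- openGF²: GF² formulas with exactly one free variable, in which equality is
never used as a guard and which contain no subformula that is a sentence. -/
def IsOpenGF2 {U B : Type} (φ : Fml U B) : Prop :=
  IsGF2 φ ∧ (∃ v, φ.free = {v}) ∧
  (∀ ψ ∈ φ.Subf, ¬ ψ.IsSentence) ∧
  (∀ ψ ∈ φ.Subf, ∀ (v : Var) (α χ : Fml U B),
      (ψ = .all v (.impl α χ) ∨ ψ = .ex v (.conj α χ)) → ¬ α.IsEqAtom)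

/-- relational structures interpreting unary predicates `U` and binary
predicates `B` -/
structure Str (U B : Type) where
  Dom : Type
  nonempty : Nonempty Dom
  u : U → Dom → Prop
  b : B → Dom → Dom → Prop

def upd {D : Type} (σ : Var → D) (v : Var) (d : D) : Var → D :=
  fun w => if w = v then d else σ w

def Sat {U B : Type} (A : Str U B) : Fml U B → (Var → A.Dom) → Prop
  | .uatom P v, σ => A.u P (σ v)
  | .batom R v w, σ => A.b R (σ v) (σ w)
  | .eqv v w, σ => σ v = σ w
  | .fls, _ => False
  | .neg φ, σ => ¬ Sat A φ σ
  | .conj φ ψ, σ => Sat A φ σ ∧ Sat A ψ σ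
  | .disj φ ψ, σ => Sat A φ σ ∨ Sat A ψ σ
  | .impl φ ψ, σ => Sat A φ σ → Sat A ψ σ
  | .all v φ, σ => ∀ d : A.Dom, Sat A φ (upd σ v d)
  | .ex v φ, σ => ∃ d : A.Dom, Sat A φ (upd σ v d)

/-- truth of a sentence in a structure -/
def SatS {U B : Type} (A : Str U B) (φ : Fml U B) : Prop := ∀ σ, Sat A φ σ

def Entails {U B : Type} (φ ψ : Fml U B) : Prop :=
  ∀ A : Str U B, SatS A φ → SatS A ψ

def Satisfiable {U B : Type} (φ : Fml U B) : Prop := ∃ A : Str U B, SatS A φ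

/-- a GF²(Σ)-sentence, for the signature Σ = (SU, SB) -/
def IsGF2Sentence {U B : Type} (SU : Set U) (SB : Set B) (ψ : Fml U B) : Prop :=
  IsGF2 ψ ∧ ψ.IsSentence ∧ ψ.upreds ⊆ SU ∧ ψ.bpreds ⊆ SB

/-- `φ₁ ⊨_Σ φ₂` : GF²(Σ)-entailment -/
def GF2Entails {U B : Type} (SU : Set U) (SB : Set B) (φ₁ φ₂ : Fml U B) : Prop :=
  ∀ ψ : Fml U B, IsGF2Sentence SU SB ψ → Entails φ₂ ψ → Entails φ₁ ψ

/-- atomic formulas in the variables x, y -/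
inductive Atom2 (U B : Type) : Type
  | ua : U → Var → Atom2 U B
  | ba : B → Var → Var → Atom2 U B

def vval {D : Type} (a a' : D) : Var → D
  | .x => a
  | .y => a'

def Atom2.inSig {U B : Type} (SU : Set U) (SB : Set B) : Atom2 U B → Prop
  | .ua P _ => P ∈ SU
  | .ba R _ _ => R ∈ SB

def Atom2.holds {U B : Type} (A : Str U B) (a a' : A.Dom) : Atom2 U B → Prop
  | .ua P v => A.u P (vval a a' v)
  | .ba R v w => A.b R (vval a a' v) (vval a a' w)

def Atom2.onlyX {U B : Type} : Atom2 U B → Prop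
  | .ua _ v => v = Var.x
  | .ba _ v w => v = Var.x ∧ w = Var.x

/-- the atomic 1-type of `a` for the signature `(SU, SB)` (the set of
Σ-atoms in the single variable x satisfied by `a`; this determines the set of
negated atoms as well) -/
def atp1 {U B : Type} (A : Str U B) (SU : Set U) (SB : Set B) (a : A.Dom) :
    Set (Atom2 U B) :=
  {α | α.onlyX ∧ α.inSig SU SB ∧ α.holds A a a}

/-- the atomic 2-type of `(a, a')` for the signature `(SU, SB)` (the set of
Σ-atoms in x, y satisfied by `(a, a')`; together with `a ≠ a'` this determines
the atomic 2-type) -/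
def atp2 {U B : Type} (A : Str U B) (SU : Set U) (SB : Set B) (a a' : A.Dom) :
    Set (Atom2 U B) :=
  {α | α.inSig SU SB ∧ α.holds A a a'}

/-- the atomic 2-type of `(a, a')` is guarded (contains `R x y` or `R y x`
for some binary `R ∈ SB`) -/
def Guarded2 {U B : Type} (A : Str U B) (SB : Set B) (a a' : A.Dom) : Prop :=
  ∃ R ∈ SB, A.b R a a' ∨ A.b R a' a

/-- GF²(Σ)-bisimulation between structures `A` and `Bm` -/
structure IsBisim {U B : Type} (A Bm : Str U B) (SU : Set U) (SB : Set B)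
    (Z : A.Dom → Bm.Dom → Prop) : Prop where
  atom_eq : ∀ {a b}, Z a b → atp1 A SU SB a = atp1 Bm SU SB b
  forth : ∀ {a b}, Z a b → ∀ a', a' ≠ a → Guarded2 A SB a a' →
      ∃ b', b' ≠ b ∧ atp2 A SU SB a a' = atp2 Bm SU SB b b' ∧ Z a' b'
  back : ∀ {a b}, Z a b → ∀ b', b' ≠ b → Guarded2 Bm SB b b' →
      ∃ a', a' ≠ a ∧ atp2 A SU SB a a' = atp2 Bm SU SB b b' ∧ Z a' b'

/-- `(A, a) ∼_Σ (Bm, b)` -/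
def Bisim {U B : Type} (A Bm : Str U B) (SU : Set U) (SB : Set B)
    (a : A.Dom) (b : Bm.Dom) : Prop :=
  ∃ Z, IsBisim A Bm SU SB Z ∧ Z a b

/-- `(A, a) ∼ᵏ_Σ (Bm, b)` : k-GF²(Σ)-bisimilarity -/
def KBisim {U B : Type} (A Bm : Str U B) (SU : Set U) (SB : Set B) :
    ℕ → A.Dom → Bm.Dom → Prop
  | 0, a, b => atp1 A SU SB a = atp1 Bm SU SB b
  | k+1, a, b => atp1 A SU SB a = atp1 Bm SU SB b ∧
      (∀ a', a' ≠ a → Guarded2 A SB a a' →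
        ∃ b', b' ≠ b ∧ atp2 A SU SB a a' = atp2 Bm SU SB b b' ∧
          KBisim A Bm SU SB k a' b') ∧
      (∀ b', b' ≠ b → Guarded2 Bm SB b b' →
        ∃ a', a' ≠ a ∧ atp2 A SU SB a a' = atp2 Bm SU SB b b' ∧
          KBisim A Bm SU SB k a' b')

/-- a (full-signature) atomic 2-type, given as its set of positive atoms,
is guarded -/
def Guarded2Type {U B : Type} (τ : Set (Atom2 U B)) : Prop :=
  ∃ R : B, Atom2.ba R Var.x Var.y ∈ τ ∨ Atom2.ba R Var.y Var.x ∈ τ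

/-- successor-saturated structures -/
def SuccSaturated {U B : Type} (A : Str U B) : Prop :=
  ∀ (a : A.Dom) (τ : Set (Atom2 U B)) (Γ : Set (Fml U B)),
    Guarded2Type τ →
    (∀ ψ ∈ Γ, IsOpenGF2 ψ ∧ ψ.free = {Var.x}) →
    (∀ Γ' : Finset (Fml U B), ↑Γ' ⊆ Γ →
      ∃ a', a' ≠ a ∧ atp2 A Set.univ Set.univ a a' = τ ∧
        ∀ ψ ∈ Γ', Sat A ψ (fun _ => a')) →
    ∃ b', b' ≠ a ∧ atp2 A Set.univ Set.univ a b' = τ ∧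
      ∀ ψ ∈ Γ, Sat A ψ (fun _ => b')

/-- finite outdegree: every element stands in a guarded atomic 2-type (for the
full signature) to only finitely many elements -/
def FiniteOutdeg {U B : Type} (A : Str U B) : Prop :=
  ∀ a : A.Dom, {a' | a' ≠ a ∧ ∃ R : B, A.b R a a' ∨ A.b R a' a}.Finite

/-- Σ-adjacency (edges of the Gaifman graph of the Σ-reduct) -/
def SigAdj {U B : Type} (A : Str U B) (SB : Set B) (a a' : A.Dom) : Prop :=
  a ≠ a' ∧ ∃ R ∈ SB, A.b R a a' ∨ A.b R a' a

/-- A forest structure: a structure whose Gaifman graph is a forest, directed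
by choosing a root for each tree; `parent p c` says that `p` is the
predecessor (parent) of `c`. -/
structure Forest (U B : Type) extends Str U B where
  parent : Dom → Dom → Prop
  parent_unique : ∀ {c p p' : Dom}, parent p c → parent p' c → p = p'
  parent_wf : WellFounded parent
  adj_iff : ∀ a a' : Dom,
    (a ≠ a' ∧ ∃ R : B, b R a a' ∨ b R a' a) ↔ (parent a a' ∨ parent a' a)

namespace Forest

variable {U B : Type}

/-- `a` together with its descendants -/
def desc (F : Forest U B) (a : F.Dom) : Set F.Dom :=
  {c | Relation.ReflTransGen F.parent a c}

/-- the subtrees rooted at `a` and at `a'` are isomorphic -/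
def SubtreeIso (F : Forest U B) (a a' : F.Dom) : Prop :=
  ∃ f : (F.desc a) ≃ (F.desc a'),
    (f ⟨a, Relation.ReflTransGen.refl⟩).val = a' ∧
    (∀ c d : F.desc a, F.parent c.val d.val ↔ F.parent (f c).val (f d).val) ∧
    (∀ (P : U) (c : F.desc a), F.u P c.val ↔ F.u P (f c).val) ∧
    (∀ (R : B) (c d : F.desc a), F.b R c.val d.val ↔ F.b R (f c).val (f d).val)

/-- regular: only finitely many subtrees up to isomorphism -/
def Regular (F : Forest U B) : Prop :=
  ∃ S : Set F.Dom, S.Finite ∧ ∀ a, ∃ a' ∈ S, F.SubtreeIso a' a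

/-- `a ≺ a'` : `a` and `a'` lie in the same Σ-tree and `a` is a proper
ancestor of `a'` -/
def prec (F : Forest U B) (SB : Set B) (a a' : F.Dom) : Prop :=
  Relation.ReflTransGen (SigAdj F.toStr SB) a a' ∧ Relation.TransGen F.parent a a'

end Forest

/-- `a_⊥`-delimited GF²(Σ)-bisimulation: like a GF²(Σ)-bisimulation except that
the back-and-forth conditions are not required at pairs whose first component
is `abot` -/
structure IsPtDelimBisim {U B : Type} (A Bm : Str U B) (SU : Set U) (SB : Set B)
    (abot : A.Dom) (Z : A.Dom → Bm.Dom → Prop) : Prop where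
  atom_eq : ∀ {a b}, Z a b → atp1 A SU SB a = atp1 Bm SU SB b
  forth : ∀ {a b}, Z a b → a ≠ abot → ∀ a', a' ≠ a → Guarded2 A SB a a' →
      ∃ b', b' ≠ b ∧ atp2 A SU SB a a' = atp2 Bm SU SB b b' ∧ Z a' b'
  back : ∀ {a b}, Z a b → a ≠ abot → ∀ b', b' ≠ b → Guarded2 Bm SB b b' →
      ∃ a', a' ≠ a ∧ atp2 A SU SB a a' = atp2 Bm SU SB b b' ∧ Z a' b'

/-- `(A, a) ∼^{a_⊥}_Σ (Bm, b)` -/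
def PtDelimBisim {U B : Type} (A Bm : Str U B) (SU : Set U) (SB : Set B)
    (abot : A.Dom) (a : A.Dom) (b : Bm.Dom) : Prop :=
  ∃ Z, IsPtDelimBisim A Bm SU SB abot Z ∧ Z a b

/-- `A_⊥`-delimited GF²(Σ)-bisimulation between a forest structure `F` and a
structure `Bm`, given by a pair of relations `Z0 (∼⁰)` and `Z1 (∼¹)`. -/
structure IsDelimBisim {U B : Type} (F : Forest U B) (Bm : Str U B)
    (SU : Set U) (SB : Set B) (Abot : Set F.Dom)
    (Z0 Z1 : F.Dom → Bm.Dom → Prop) : Prop where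
  zero : ∀ {a b}, Z0 a b →
    atp1 F.toStr SU SB a = atp1 Bm SU SB b ∧
    (∀ a', a' ≠ a → Guarded2 F.toStr SB a a' →
      ∃ b', b' ≠ b ∧
        ((F.parent a' a ∧ a' ∈ Abot) → Z1 a' b') ∧
        (¬ (F.parent a' a ∧ a' ∈ Abot) → Z0 a' b')) ∧
    (∀ b', b' ≠ b → Guarded2 Bm SB b b' →
      ∃ a', a' ≠ a ∧
        ((F.parent a' a ∧ a' ∈ Abot) → Z1 a' b') ∧
        (¬ (F.parent a' a ∧ a' ∈ Abot) → Z0 a' b'))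
  one : ∀ {a b}, Z1 a b → (∀ p, F.parent p a → p ∉ Abot) →
    atp1 F.toStr SU SB a = atp1 Bm SU SB b ∧
    (∀ a', a' ≠ a → Guarded2 F.toStr SB a a' →
      ∃ b', b' ≠ b ∧
        ((F.parent a a' ∧ a ∈ Abot) → Z0 a' b') ∧
        (¬ (F.parent a a' ∧ a ∈ Abot) → Z1 a' b')) ∧
    (∀ b', b' ≠ b → Guarded2 Bm SB b b' →
      ∃ a', a' ≠ a ∧
        ((F.parent a a' ∧ a ∈ Abot) → Z0 a' b') ∧
        (¬ (F.parent a a' ∧ a ∈ Abot) → Z1 a' b'))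

/-- `(F, a) ∼^{A_⊥}_Σ (Bm, b)` -/
def DelimBisim {U B : Type} (F : Forest U B) (Bm : Str U B)
    (SU : Set U) (SB : Set B) (Abot : Set F.Dom) (a : F.Dom) (b : Bm.Dom) : Prop :=
  ∃ Z0 Z1, IsDelimBisim F Bm SU SB Abot Z0 Z1 ∧ Z0 a b

/-- `cl φ` : the subformulas of `φ` closed under single negation and renaming
of free variables (among x, y) -/
def clSet {U B : Type} (φ : Fml U B) : Set (Fml U B) :=
  {χ | ∃ ψ ∈ φ.Subf, ∃ f : Var → Var,
      χ = ψ.renameFree f ∨ χ = .neg (ψ.renameFree f)}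

/-- a 1-type for `φ₂`: a set of formulas `ψ(x)` from `cl φ₂` such that
`φ₂ ∧ ∃x ⋀ t(x)` is satisfiable -/
def OneType {U B : Type} (φ₂ : Fml U B) (t : Set (Fml U B)) : Prop :=
  t ⊆ clSet φ₂ ∧ (∀ ψ ∈ t, ψ.free ⊆ {Var.x}) ∧
  ∃ (A : Str U B) (a : A.Dom), SatS A φ₂ ∧ ∀ ψ ∈ t, Sat A ψ (fun _ => a)

/-- `tp_Bm(b)` : the 1-type of `b` in `Bm` (w.r.t. `φ₂`) -/
def tpOf {U B : Type} (Bm : Str U B) (φ₂ : Fml U B) (b : Bm.Dom) :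
    Set (Fml U B) :=
  {ψ | ψ ∈ clSet φ₂ ∧ ψ.free ⊆ {Var.x} ∧ Sat Bm ψ (fun _ => b)}

end GFC

namespace GFC

/-- a tiling system `𝔇 = (𝔗, H, V, Right, Left, Top, Bottom)` -/
structure TS where
  Tile : Type
  deq : DecidableEq Tile
  fin : Fintype Tile
  H : Tile → Tile → Bool
  V : Tile → Tile → Bool
  Right : Tile → Bool
  Left : Tile → Bool
  Top : Tile → Bool
  Bottom : Tile → Bool

/-- a solution `(n, m, τ)` of the tiling system `D` -/
def TS.HasSolution (D : TS) : Prop :=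
  ∃ (n m : ℕ) (hn : 0 < n) (hm : 0 < m) (τ : Fin n → Fin m → D.Tile),
    (∀ (i : Fin n) (j : Fin m) (h : (i : ℕ) + 1 < n),
        D.H (τ i j) (τ ⟨(i : ℕ) + 1, h⟩ j) = true) ∧
    (∀ (i : Fin n) (j : Fin m) (h : (j : ℕ) + 1 < m),
        D.V (τ i j) (τ i ⟨(j : ℕ) + 1, h⟩) = true) ∧
    (∀ j : Fin m, D.Left (τ ⟨0, hn⟩ j) = true ∧
        D.Right (τ ⟨n - 1, by omega⟩ j) = true) ∧
    (∀ i : Fin n, D.Bottom (τ i ⟨0, hm⟩) = true ∧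
        D.Top (τ i ⟨m - 1, by omega⟩) = true)

/-- unary predicates: one per tile, `G`, `O`, the four border predicates, and
the fresh predicates `Q`, `P` of `φ₂` -/
inductive UP (T : Type) : Type
  | tile (t : T)
  | G
  | O
  | Bri  -- B→
  | Ble  -- B←
  | Bup  -- B↑
  | Bdo  -- B↓
  | Qp
  | Pp

/-- binary predicates `R_h`, `R_v`, `S_h`, `S_v` -/
inductive BP : Type
  | Rh
  | Rv
  | Sh
  | Sv

def disjL {U B : Type} : List (Fml U B) → Fml U B
  | [] => .fls
  | φ :: l => .disj φ (disjL l)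

def conjL {U B : Type} : List (Fml U B) → Fml U B
  | [] => .neg .fls
  | φ :: l => .conj φ (conjL l)

noncomputable def tiles (D : TS) : List D.Tile := (@Finset.univ D.Tile D.fin).toList

/-- conjunct (1) of `φ₁`: every grid position carries exactly one tile and the
matching conditions hold -/
noncomputable def phi1Tiles (D : TS) : Fml (UP D.Tile) BP :=
  letI := D.deq
  .conj
    (.all .x (.impl (.uatom .G .x)
      (disjL ((tiles D).map (fun T =>
        .conj (.uatom (.tile T) .x)
          (conjL (((tiles D).filter (fun T' => decide (T' ≠ T))).map
            (fun T' => .neg (.uatom (.tile T') .x)))))))))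
    (.all .x (.impl (.uatom .G .x)
      (conjL ((tiles D).map (fun T =>
        .impl (.uatom (.tile T) .x)
          (.conj
            (disjL (((tiles D).filter (fun T' => D.H T T')).map (fun T' =>
              .all .y (.impl (.batom .Rh .x .y) (.uatom (.tile T') .y)))))
            (disjL (((tiles D).filter (fun T' => D.V T T')).map (fun T' =>
              .all .y (.impl (.batom .Rv .x .y) (.uatom (.tile T') .y)))))))))))

/-- conjunct (2) of `φ₁`, for one direction `D` with border predicate `Bd`,
edge formula `E(x,y)` and transversal predicate `Fb` -/
def borderAx (Tl : Type) (Bd : UP Tl) (E : Fml (UP Tl) BP) (Fb : BP) :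
    Fml (UP Tl) BP :=
  .conj
    (.all .x (.impl (.conj (.uatom .G .x) (.uatom Bd .x))
      (.conj (.neg (.ex .y E))
        (.conj (.all .y (.impl (.batom Fb .x .y) (.uatom Bd .y)))
               (.all .y (.impl (.batom Fb .y .x) (.uatom Bd .y)))))))
    (.all .x (.impl (.conj (.uatom .G .x) (.neg (.uatom Bd .x))) (.ex .y E)))

/-- conjunct (5) of `φ₁` for one border predicate and the corresponding set of
admissible tiles -/
noncomputable def borderTiles (D : TS) (Bd : UP D.Tile) (S : D.Tile → Bool) :
    Fml (UP D.Tile) BP :=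
  .all .x (.impl (.uatom Bd .x)
    (disjL (((tiles D).filter S).map (fun T => .uatom (.tile T) .x))))

/-- the sentence `φ₁` of the FO² tiling reduction -/
noncomputable def phi1T (D : TS) : Fml (UP D.Tile) BP :=
  .conj (phi1Tiles D)
  (.conj (borderAx D.Tile .Bri (.batom .Rh .x .y) .Rv)
  (.conj (borderAx D.Tile .Ble (.batom .Rh .y .x) .Rv)
  (.conj (borderAx D.Tile .Bup (.batom .Rv .x .y) .Rh)
  (.conj (borderAx D.Tile .Bdo (.batom .Rv .y .x) .Rh)
  (.conj (.ex .x (.conj (.uatom .O .x)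
            (.conj (.uatom .Ble .x) (.uatom .Bdo .x))))
  (.conj (.all .x (.impl (.uatom .O .x) (.uatom .G .x)))
  (.conj (.all .x (.impl (.uatom .G .x)
            (.all .y (.impl (.batom .Rh .x .y) (.uatom .G .y)))))
  (.conj (.all .x (.impl (.uatom .G .x)
            (.all .y (.impl (.batom .Rv .x .y) (.uatom .G .y)))))
  (.conj (borderTiles D .Bri D.Right)
  (.conj (borderTiles D .Ble D.Left)
  (.conj (borderTiles D .Bup D.Top)
  (.conj (borderTiles D .Bdo D.Bottom)
  (.conj (.all .x (.all .y (.impl (.batom .Sh .x .y) (.batom .Sh .x .y))))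
         (.all .x (.all .y (.impl (.batom .Sv .x .y) (.batom .Sv .x .y)))))))))))))))))

/-- `φ_D(x)`, the grid-defect formula -/
def phiDT (Tl : Type) : Fml (UP Tl) BP :=
  .conj
    (.ex .y (.conj (.batom .Rh .x .y)
      (.all .x (.impl (.batom .Rv .y .x) (.uatom .Pp .x)))))
    (.ex .y (.conj (.batom .Rv .x .y)
      (.all .x (.impl (.batom .Rh .y .x) (.neg (.uatom .Pp .x))))))

/-- the sentence `φ₂` of the FO² tiling reduction -/
def phi2T (Tl : Type) : Fml (UP Tl) BP :=
  .conj
    (.ex .x (.conj (.uatom .O .x) (.uatom .Qp .x)))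
    (.all .x (.impl (.uatom .Qp .x)
      (.disj (.ex .y (.conj (.batom .Rh .x .y) (.uatom .Qp .y)))
        (.disj (.ex .y (.conj (.batom .Rv .x .y) (.uatom .Qp .y)))
          (phiDT Tl)))))

/-- the signature `Σ` of `φ₁` (everything except the fresh predicates Q, P) -/
def SigOne (Tl : Type) : Set (UP Tl) := {u | u ≠ UP.Qp ∧ u ≠ UP.Pp}

end GFC

namespace GFC

open Classical in
/-- replace the interpretations of the fresh unary predicates `Q` and `P`
(the {Q,P}-extensions of the Σ-reduct of `A` are exactly the structures
`override A q p`) -/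
noncomputable def overrideQP (D : TS) (A : Str (UP D.Tile) BP)
    (q p : A.Dom → Prop) : Str (UP D.Tile) BP where
  Dom := A.Dom
  nonempty := A.nonempty
  u := fun P a => if P = UP.Qp then q a else if P = UP.Pp then p a else A.u P a
  b := A.b

/-!
Suppose that no sets `q` and `p` with `o ∈ q` satisfy the second conjunct of `φ₂`. Then

* no infinite path of `R_h`- and `R_v`-edges starts at `o`, since the set `q` of all starting points
  of such paths would never have to end in a defect;
* at every point reachable from `o`, each pair of a horizontal successor `y` and a vertical
  successor has a common successor closing the square, since otherwise taking `p` to be the vertical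
  successors of `y` produces a defect, and `q` could be the set of points from which that defect
  is reachable.

Hence following `R_h` and `R_v` from the lower left corner `o` reaches the right and the upper
border after finitely many steps, the squares fill in the rectangle spanned by these two paths, and
reading off the tiles gives a solution.
-/

open Relation (ReflTransGen)

section Defects

variable {X : Type*} {h v : X → X → Prop} {p : X → Prop} {x : X}

/-- The semantic content of `φ_D`: the set `p` separates the vertical successors of some horizontal
successor of `x` from the horizontal successors of some vertical successor of `x`. -/
def IsDefect (h v : X → X → Prop) (p : X → Prop) (x : X) : Prop :=
  (∃ y, h x y ∧ ∀ z, v y z → p z) ∧ ∃ y, v x y ∧ ∀ z, h y z → ¬ p z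

/-- The semantic content of the second conjunct of `φ₂`: from each point of `q` one can take a step
within `q`, unless the point is a defect. -/
def LeadsToDefect (h v : X → X → Prop) (q p : X → Prop) : Prop :=
  ∀ x, q x → (∃ y, h x y ∧ q y) ∨ (∃ y, v x y ∧ q y) ∨ IsDefect h v p x

/-- Every horizontal and every vertical successor of `x` have a common successor completing
the square. -/
def SquaresCloseAt (h v : X → X → Prop) (x : X) : Prop :=
  ∀ y y', h x y → v x y' → ∃ z, v y z ∧ h y' z

theorem squaresCloseAt_iff_forall_not_isDefect :
    SquaresCloseAt h v x ↔ ∀ p, ¬ IsDefect h v p x := by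
  constructor
  · rintro hx p ⟨⟨y, hxy, hy⟩, y', hxy', hy'⟩
    obtain ⟨z, hyz, hyz'⟩ := hx y y' hxy hxy'
    exact hy' z hyz' (hy z hyz)
  · intro hx y y' hxy hxy'
    by_contra! hz
    exact hx (v y) ⟨⟨y, hxy, fun _ hyz => hyz⟩, y', hxy', fun z hyz' hyz => hz z hyz hyz'⟩

theorem leadsToDefect_not_acc (h v : X → X → Prop) (p : X → Prop) :
    LeadsToDefect h v (fun x => ¬ Acc (flip (h ⊔ v)) x) p := by
  intro x hx
  obtain ⟨y, hxy, hy⟩ : ∃ y, (h ⊔ v) x y ∧ ¬ Acc (flip (h ⊔ v)) y := by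
    by_contra! hacc
    exact hx ⟨x, hacc⟩
  rcases hxy with hxy | hxy
  · exact .inl ⟨y, hxy, hy⟩
  · exact .inr (.inl ⟨y, hxy, hy⟩)

theorem IsDefect.leadsToDefect (hx : IsDefect h v p x) :
    LeadsToDefect h v (fun y => ReflTransGen (h ⊔ v) y x) p := by
  intro y hyx
  rcases hyx.cases_head with rfl | ⟨z, hyz | hyz, hzx⟩
  · exact .inr (.inr hx)
  · exact .inl ⟨z, hyz, hzx⟩
  · exact .inr (.inl ⟨z, hyz, hzx⟩)

end Defects

section Grids

variable {X : Type*} {r h v : X → X → Prop} {P : X → Prop} {n m : ℕ}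

/-- The first `n + 1` values of `f` form an `r`-path. -/
def IsPath (r : X → X → Prop) (n : ℕ) (f : ℕ → X) : Prop :=
  ∀ i < n, r (f i) (f (i + 1))

theorem IsPath.cons {f : ℕ → X} {a : X} (hf : IsPath r n f) (ha : r a (f 0)) :
    IsPath r (n + 1) (fun i => i.casesOn a f)
  | 0, _ => ha
  | i + 1, hi => hf i (Nat.lt_of_succ_lt_succ hi)

theorem IsPath.forall_le_of_closed {f : ℕ → X} (hf : IsPath r n f)
    (hP : ∀ ⦃x y⦄, P x → r x y → P y) (h0 : P (f 0)) : ∀ i ≤ n, P (f i)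
  | 0, _ => h0
  | i + 1, hi => hP (hf.forall_le_of_closed hP h0 i (Nat.le_of_succ_le hi)) (hf i hi)

theorem IsPath.forall_le_of_closed_within {f : ℕ → X} {S : X → Prop} (hf : IsPath r n f)
    (hS : ∀ {x y}, S x → r x y → S y) (hP : ∀ {x y}, S x → P x → r x y → P y)
    (hS0 : S (f 0)) (hP0 : P (f 0)) : ∀ i ≤ n, P (f i) := fun i hi =>
  (hf.forall_le_of_closed (P := fun x => S x ∧ P x)
    (fun _ _ hx hxy => ⟨hS hx.1 hxy, hP hx.1 hx.2 hxy⟩) ⟨hS0, hP0⟩ i hi).2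

theorem exists_isPath_of_acc {a : X} (ha : Acc (flip r) a)
    (hP : ∀ x, ReflTransGen r a x → ¬ P x → ∃ y, r x y) :
    ∃ n f, f 0 = a ∧ IsPath r n f ∧ P (f n) := by
  induction ha with
  | intro a _ ih =>
    by_cases hPa : P a
    · exact ⟨0, fun _ => a, rfl, fun i hi => absurd hi i.not_lt_zero, hPa⟩
    · obtain ⟨y, hay⟩ := hP a .refl hPa
      obtain ⟨n, f, rfl, hf, hPf⟩ := ih y hay fun x hyx => hP x (.head hay hyx)
      exact ⟨n + 1, fun i => i.casesOn a f, rfl, hf.cons hay, hPf⟩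

/-- The values `F i j` with `i ≤ n` and `j ≤ m` form a rectangular grid whose horizontal edges,
along `i`, are in `h` and whose vertical edges, along `j`, are in `v`. -/
structure IsGrid (h v : X → X → Prop) (n m : ℕ) (F : ℕ → ℕ → X) : Prop where
  row : ∀ j ≤ m, IsPath h n (F · j)
  col : ∀ i ≤ n, IsPath v m (F i)

theorem IsGrid.forall_le_of_closed {F : ℕ → ℕ → X} (hF : IsGrid h v n m F)
    (hPh : ∀ ⦃x y⦄, P x → h x y → P y) (hPv : ∀ ⦃x y⦄, P x → v x y → P y) (h0 : P (F 0 0)) :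
    ∀ i ≤ n, ∀ j ≤ m, P (F i j) := by
  intro i hi
  have hi0 : P (F i 0) := (hF.row 0 m.zero_le).forall_le_of_closed hPh h0 i hi
  exact (hF.col i hi).forall_le_of_closed hPv hi0

/-- The grid with bottom row `row` and left column `col` obtained by completing squares from the
lower left to the upper right, where `sq x y z` completes the square with lower left corner `x`,
lower right corner `y` and upper left corner `z`. -/
def fillGrid (sq : X → X → X → X) (row col : ℕ → X) : ℕ → ℕ → X
  | 0, j => col j
  | i + 1, 0 => row (i + 1)
  | i + 1, j + 1 =>
    sq (fillGrid sq row col i j) (fillGrid sq row col (i + 1) j) (fillGrid sq row col i (j + 1))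

theorem fillGrid_zero_right (sq : X → X → X → X) {row col : ℕ → X} (h0 : row 0 = col 0) :
    ∀ i, fillGrid sq row col i 0 = row i
  | 0 => by rw [fillGrid, h0]
  | i + 1 => by rw [fillGrid]

theorem isGrid_fillGrid {sq : X → X → X → X} {row col : ℕ → X}
    (hrow : IsPath h n row) (hcol : IsPath v m col) (h0 : row 0 = col 0)
    (hsq : ∀ x y y', ReflTransGen (h ⊔ v) (col 0) x → h x y → v x y' →
      v y (sq x y y') ∧ h y' (sq x y y')) :
    IsGrid h v n m (fillGrid sq row col) := by
  set F := fillGrid sq row col with hF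
  have square {i j} (hij : ReflTransGen (h ⊔ v) (col 0) (F i j))
      (hh : h (F i j) (F (i + 1) j)) (hv : v (F i j) (F i (j + 1))) :
      v (F (i + 1) j) (F (i + 1) (j + 1)) ∧ h (F i (j + 1)) (F (i + 1) (j + 1)) := by
    simpa only [hF, fillGrid] using hsq _ _ _ hij hh hv
  have edges_right {i} (hi : i < n) (hreach : ∀ j ≤ m, ReflTransGen (h ⊔ v) (col 0) (F i j))
      (hv : IsPath v m (F i)) : ∀ j ≤ m, h (F i j) (F (i + 1) j) := by
    intro j
    induction j with
    | zero => simpa only [hF, fillGrid_zero_right sq h0] using fun _ => hrow i hi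
    | succ j ih => exact fun hj => (square (hreach j (by omega)) (ih (by omega)) (hv j hj)).2
  have column : ∀ i ≤ n,
      (∀ j ≤ m, ReflTransGen (h ⊔ v) (col 0) (F i j)) ∧ IsPath v m (F i) := by
    intro i
    induction i with
    | zero =>
      have hF0 : F 0 = col := funext fun j => by rw [hF, fillGrid]
      rw [hF0]
      exact fun _ => ⟨hcol.forall_le_of_closed (fun _ _ hx hxy => hx.tail (.inr hxy)) .refl, hcol⟩
    | succ i ih =>
      intro hi
      obtain ⟨hreach, hv⟩ := ih (Nat.le_of_succ_le hi)
      have hh := edges_right hi hreach hv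
      exact ⟨fun j hj => (hreach j hj).tail (.inl (hh j hj)),
        fun j hj => (square (hreach j hj.le) (hh j hj.le) (hv j hj)).1⟩
  exact ⟨fun j hj i hi => edges_right hi (column i hi.le).1 (column i hi.le).2 j hj,
    fun i hi => (column i hi).2⟩

theorem exists_isGrid_of_isPath {row col : ℕ → X}
    (hrow : IsPath h n row) (hcol : IsPath v m col) (h0 : row 0 = col 0)
    (hsq : ∀ x, ReflTransGen (h ⊔ v) (col 0) x → SquaresCloseAt h v x) :
    ∃ F, IsGrid h v n m F ∧ (∀ i, F i 0 = row i) ∧ ∀ j, F 0 j = col j := by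
  have hsq' : ∀ x y y', ∃ z, ReflTransGen (h ⊔ v) (col 0) x → h x y → v x y' →
      v y z ∧ h y' z := by
    intro x y y'
    by_cases hx : ReflTransGen (h ⊔ v) (col 0) x ∧ h x y ∧ v x y'
    · obtain ⟨z, hz⟩ := hsq x hx.1 y y' hx.2.1 hx.2.2
      exact ⟨z, fun _ _ _ => hz⟩
    · exact ⟨x, fun hreach hxy hxy' => absurd ⟨hreach, hxy, hxy'⟩ hx⟩
  choose sq hsq using hsq'
  exact ⟨fillGrid sq row col, isGrid_fillGrid hrow hcol h0 hsq, fillGrid_zero_right sq h0,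
    fun j => by rw [fillGrid]⟩

end Grids

section Semantics

variable {U B : Type}

theorem sat_disjL (A : Str U B) (l : List (Fml U B)) (σ : Var → A.Dom) :
    Sat A (disjL l) σ ↔ ∃ φ ∈ l, Sat A φ σ := by
  induction l with
  | nil => simp [disjL, Sat]
  | cons φ l ih => simp [disjL, Sat, ih]

theorem sat_conjL (A : Str U B) (l : List (Fml U B)) (σ : Var → A.Dom) :
    Sat A (conjL l) σ ↔ ∀ φ ∈ l, Sat A φ σ := by
  induction l with
  | nil => simp [conjL, Sat]
  | cons φ l ih => simp [conjL, Sat, ih]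

theorem upd_x_upd_y {X : Type} (σ : Var → X) (a b : X) :
    upd (upd σ .x a) .y b = vval a b := by
  funext w
  cases w <;> simp [upd, vval]

theorem mem_tiles (D : TS) (T : D.Tile) : T ∈ tiles D := by
  simp [tiles]

variable {D : TS} {A : Str (UP D.Tile) BP} {σ : Var → A.Dom}

theorem sat_phi1Tiles_iff :
    Sat A (phi1Tiles D) σ ↔
      (∀ x, A.u .G x → ∃! T, A.u (.tile T) x) ∧
      ∀ x, A.u .G x → ∀ T, A.u (.tile T) x →
        (∃ T', D.H T T' = true ∧ ∀ y, A.b .Rh x y → A.u (.tile T') y) ∧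
        ∃ T', D.V T T' = true ∧ ∀ y, A.b .Rv x y → A.u (.tile T') y := by
  simp [phi1Tiles, Sat, sat_disjL, sat_conjL, upd, mem_tiles, ExistsUnique, not_imp_not]

theorem sat_borderTiles_iff {Bd : UP D.Tile} {S : D.Tile → Bool} :
    Sat A (borderTiles D Bd S) σ ↔ ∀ x, A.u Bd x → ∃ T, S T = true ∧ A.u (.tile T) x := by
  simp [borderTiles, Sat, sat_disjL, upd, mem_tiles]

theorem sat_borderAx_iff {Bd : UP D.Tile} {E : Fml (UP D.Tile) BP} {R : BP} :
    Sat A (borderAx D.Tile Bd E R) σ ↔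
      (∀ x, A.u .G x → A.u Bd x →
        (¬ ∃ y, Sat A E (vval x y)) ∧
        (∀ y, A.b R x y → A.u Bd y) ∧ ∀ y, A.b R y x → A.u Bd y) ∧
      ∀ x, A.u .G x → ¬ A.u Bd x → ∃ y, Sat A E (vval x y) := by
  simp [borderAx, Sat, upd_x_upd_y, upd]

theorem satS_overrideQP_phi2T_iff {q p : A.Dom → Prop} :
    SatS (overrideQP D A q p) (phi2T D.Tile) ↔
      (∃ x, A.u .O x ∧ q x) ∧ LeadsToDefect (A.b .Rh) (A.b .Rv) q p := by
  have := A.nonempty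
  simp [SatS, phi2T, phiDT, Sat, upd, overrideQP, LeadsToDefect, IsDefect]

end Semantics

section TilingModels

variable {D : TS} {A : Str (UP D.Tile) BP}

/-- The consequences of `φ₁` from which a tiling can be read off a rectangular grid in `A`. -/
structure IsTilingModel (A : Str (UP D.Tile) BP) : Prop where
  existsUnique_tile : ∀ {x}, A.u .G x → ∃! T, A.u (.tile T) x
  H_of_Rh : ∀ {x y T T'}, A.u .G x → A.b .Rh x y → A.u (.tile T) x → A.u (.tile T') y →
    D.H T T' = true
  V_of_Rv : ∀ {x y T T'}, A.u .G x → A.b .Rv x y → A.u (.tile T) x → A.u (.tile T') y →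
    D.V T T' = true
  G_of_O : ∀ {x}, A.u .O x → A.u .G x
  G_of_Rh : ∀ {x y}, A.u .G x → A.b .Rh x y → A.u .G y
  G_of_Rv : ∀ {x y}, A.u .G x → A.b .Rv x y → A.u .G y
  exists_Rh : ∀ {x}, A.u .G x → ¬ A.u .Bri x → ∃ y, A.b .Rh x y
  exists_Rv : ∀ {x}, A.u .G x → ¬ A.u .Bup x → ∃ y, A.b .Rv x y
  Bri_of_Rv : ∀ {x y}, A.u .G x → A.u .Bri x → A.b .Rv x y → A.u .Bri y
  Ble_of_Rv : ∀ {x y}, A.u .G x → A.u .Ble x → A.b .Rv x y → A.u .Ble y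
  Bup_of_Rh : ∀ {x y}, A.u .G x → A.u .Bup x → A.b .Rh x y → A.u .Bup y
  Bdo_of_Rh : ∀ {x y}, A.u .G x → A.u .Bdo x → A.b .Rh x y → A.u .Bdo y
  Right_of_Bri : ∀ {x T}, A.u .G x → A.u .Bri x → A.u (.tile T) x → D.Right T = true
  Left_of_Ble : ∀ {x T}, A.u .G x → A.u .Ble x → A.u (.tile T) x → D.Left T = true
  Top_of_Bup : ∀ {x T}, A.u .G x → A.u .Bup x → A.u (.tile T) x → D.Top T = true
  Bottom_of_Bdo : ∀ {x T}, A.u .G x → A.u .Bdo x → A.u (.tile T) x → D.Bottom T = true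
  exists_origin : ∃ o, A.u .O o ∧ A.u .Ble o ∧ A.u .Bdo o

theorem isTilingModel_of_satS_phi1T (hA : SatS A (phi1T D)) : IsTilingModel A := by
  obtain ⟨d⟩ := A.nonempty
  have hφ := hA fun _ => d
  simp only [phi1T, Sat, upd, sat_phi1Tiles_iff, sat_borderAx_iff, sat_borderTiles_iff] at hφ
  obtain ⟨⟨tile_unique, tile_match⟩, right, left, top, bottom, origin, G_of_O, G_of_Rh, G_of_Rv,
    right_tile, left_tile, top_tile, bottom_tile, -⟩ := hφ
  have eq_tile {x T T'} (hx : A.u .G x) (hT : A.u (.tile T) x) (hT' : A.u (.tile T') x) :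
      T = T' := (tile_unique x hx).unique hT hT'
  have border_tile {Bd} {S : D.Tile → Bool}
      (hS : ∀ x, A.u Bd x → ∃ T, S T = true ∧ A.u (.tile T) x) {x T}
      (hG : A.u .G x) (hx : A.u Bd x) (hT : A.u (.tile T) x) : S T = true := by
    obtain ⟨T', hS', hT'⟩ := hS x hx
    exact eq_tile hG hT' hT ▸ hS'
  exact
    { existsUnique_tile := tile_unique _
      H_of_Rh := fun hx hxy hT hT' => by
        obtain ⟨T₁, hH, hT₁⟩ := (tile_match _ hx _ hT).1
        exact eq_tile (G_of_Rh _ hx _ hxy) (hT₁ _ hxy) hT' ▸ hH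
      V_of_Rv := fun hx hxy hT hT' => by
        obtain ⟨T₁, hV, hT₁⟩ := (tile_match _ hx _ hT).2
        exact eq_tile (G_of_Rv _ hx _ hxy) (hT₁ _ hxy) hT' ▸ hV
      G_of_O := G_of_O _
      G_of_Rh := fun hx => G_of_Rh _ hx _
      G_of_Rv := fun hx => G_of_Rv _ hx _
      exists_Rh := right.2 _
      exists_Rv := top.2 _
      Bri_of_Rv := fun hG hx => (right.1 _ hG hx).2.1 _
      Ble_of_Rv := fun hG hx => (left.1 _ hG hx).2.1 _
      Bup_of_Rh := fun hG hx => (top.1 _ hG hx).2.1 _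
      Bdo_of_Rh := fun hG hx => (bottom.1 _ hG hx).2.1 _
      Right_of_Bri := border_tile right_tile
      Left_of_Ble := border_tile left_tile
      Top_of_Bup := border_tile top_tile
      Bottom_of_Bdo := border_tile bottom_tile
      exists_origin := origin }

theorem TS.hasSolution_of_nat_tiling {n m : ℕ} (τ : ℕ → ℕ → D.Tile)
    (hH : ∀ i < n, ∀ j ≤ m, D.H (τ i j) (τ (i + 1) j) = true)
    (hV : ∀ i ≤ n, ∀ j < m, D.V (τ i j) (τ i (j + 1)) = true)
    (hLeft : ∀ j ≤ m, D.Left (τ 0 j) = true) (hRight : ∀ j ≤ m, D.Right (τ n j) = true)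
    (hBottom : ∀ i ≤ n, D.Bottom (τ i 0) = true) (hTop : ∀ i ≤ n, D.Top (τ i m) = true) :
    D.HasSolution :=
  ⟨n + 1, m + 1, n.succ_pos, m.succ_pos, fun i j => τ i j,
    fun i j hi => hH i (by omega) j (by omega), fun i j hj => hV i (by omega) j (by omega),
    fun j => ⟨hLeft j (by omega), hRight j (by omega)⟩,
    fun i => ⟨hBottom i (by omega), hTop i (by omega)⟩⟩

namespace IsTilingModel

theorem G_of_reflTransGen (hA : IsTilingModel A) {o x : A.Dom} (ho : A.u .G o)
    (hox : ReflTransGen (A.b .Rh ⊔ A.b .Rv) o x) : A.u .G x := by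
  induction hox with
  | refl => exact ho
  | tail _ hyz hy => exact hyz.elim (hA.G_of_Rh hy) (hA.G_of_Rv hy)

theorem hasSolution_of_isGrid (hA : IsTilingModel A) {n m : ℕ} {F : ℕ → ℕ → A.Dom}
    (hF : IsGrid (A.b .Rh) (A.b .Rv) n m F) (hG : A.u .G (F 0 0))
    (hleft : A.u .Ble (F 0 0)) (hbottom : A.u .Bdo (F 0 0))
    (hright : A.u .Bri (F n 0)) (htop : A.u .Bup (F 0 m)) : D.HasSolution := by
  have : Nonempty D.Tile := ⟨(hA.existsUnique_tile hG).choose⟩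
  have exists_tile : ∀ x, A.u .G x → ∃ T, A.u (.tile T) x := fun _ hx =>
    (hA.existsUnique_tile hx).exists
  choose! τ hτ using exists_tile
  have hGF : ∀ i ≤ n, ∀ j ≤ m, A.u .G (F i j) :=
    hF.forall_le_of_closed (fun _ _ => hA.G_of_Rh) (fun _ _ => hA.G_of_Rv) hG
  have hτF : ∀ i ≤ n, ∀ j ≤ m, A.u (.tile (τ (F i j))) (F i j) := fun i hi j hj =>
    hτ _ (hGF i hi j hj)
  have left := (hF.col 0 n.zero_le).forall_le_of_closed_within hA.G_of_Rv hA.Ble_of_Rv hG hleft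
  have right := (hF.col n le_rfl).forall_le_of_closed_within hA.G_of_Rv hA.Bri_of_Rv
    (hGF n le_rfl 0 m.zero_le) hright
  have bottom := (hF.row 0 m.zero_le).forall_le_of_closed_within hA.G_of_Rh hA.Bdo_of_Rh hG hbottom
  have top := (hF.row m le_rfl).forall_le_of_closed_within hA.G_of_Rh hA.Bup_of_Rh
    (hGF 0 n.zero_le m le_rfl) htop
  exact TS.hasSolution_of_nat_tiling (fun i j => τ (F i j))
    (fun i hi j hj => hA.H_of_Rh (hGF i hi.le j hj) (hF.row j hj i hi)
      (hτF i hi.le j hj) (hτF (i + 1) hi j hj))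
    (fun i hi j hj => hA.V_of_Rv (hGF i hi j hj.le) (hF.col i hi j hj)
      (hτF i hi j hj.le) (hτF i hi (j + 1) hj))
    (fun j hj => hA.Left_of_Ble (hGF 0 n.zero_le j hj) (left j hj) (hτF 0 n.zero_le j hj))
    (fun j hj => hA.Right_of_Bri (hGF n le_rfl j hj) (right j hj) (hτF n le_rfl j hj))
    (fun i hi => hA.Bottom_of_Bdo (hGF i hi 0 m.zero_le) (bottom i hi) (hτF i hi 0 m.zero_le))
    (fun i hi => hA.Top_of_Bup (hGF i hi m le_rfl) (top i hi) (hτF i hi m le_rfl))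

theorem hasSolution_of_acc_of_squaresCloseAt (hA : IsTilingModel A) {o : A.Dom}
    (hG : A.u .G o) (hleft : A.u .Ble o) (hbottom : A.u .Bdo o)
    (hacc : Acc (flip (A.b .Rh ⊔ A.b .Rv)) o)
    (hsq : ∀ x, ReflTransGen (A.b .Rh ⊔ A.b .Rv) o x → SquaresCloseAt (A.b .Rh) (A.b .Rv) x) :
    D.HasSolution := by
  obtain ⟨n, row, hrow0, hrow, hright⟩ :=
    exists_isPath_of_acc (r := A.b .Rh) (P := A.u .Bri)
      (Subrelation.accessible (fun hxy => .inl hxy) hacc)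
      fun x hox => hA.exists_Rh (hA.G_of_reflTransGen hG (ReflTransGen.mono le_sup_left _ _ hox))
  obtain ⟨m, col, rfl, hcol, htop⟩ :=
    exists_isPath_of_acc (r := A.b .Rv) (P := A.u .Bup)
      (Subrelation.accessible (fun hxy => .inr hxy) hacc)
      fun x hox => hA.exists_Rv (hA.G_of_reflTransGen hG (ReflTransGen.mono le_sup_right _ _ hox))
  obtain ⟨F, hF, hFrow, hFcol⟩ := exists_isGrid_of_isPath hrow hcol hrow0 hsq
  rw [← hFcol] at hG hleft hbottom htop
  rw [← hFrow] at hright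
  exact hA.hasSolution_of_isGrid hF hG hleft hbottom hright htop

end IsTilingModel

end TilingModels

/-- If some Σ-structure satisfies `φ₁` and has no
{Q,P}-extension satisfying `φ₂`, then the tiling system `𝔇` has a solution. -/
theorem no_extension_implies_tiling_solution
    (D : TS)
    (h : ∃ A : Str (UP D.Tile) BP, SatS A (phi1T D) ∧
      ∀ q p : A.Dom → Prop, ¬ SatS (overrideQP D A q p) (phi2T D.Tile)) :
    D.HasSolution := by
  obtain ⟨A, hφ₁, hφ₂⟩ := h
  have hA : IsTilingModel A := isTilingModel_of_satS_phi1T hφ₁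
  obtain ⟨o, hO, hleft, hbottom⟩ := hA.exists_origin
  have not_mem {q p} (hqp : LeadsToDefect (A.b .Rh) (A.b .Rv) q p) : ¬ q o := fun hq =>
    hφ₂ q p (satS_overrideQP_phi2T_iff.2 ⟨⟨o, hO, hq⟩, hqp⟩)
  have hacc : Acc (flip (A.b .Rh ⊔ A.b .Rv)) o :=
    not_not.1 (not_mem (leadsToDefect_not_acc _ _ fun _ => True))
  have hsq : ∀ x, ReflTransGen (A.b .Rh ⊔ A.b .Rv) o x →
      SquaresCloseAt (A.b .Rh) (A.b .Rv) x := fun x hox =>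
    squaresCloseAt_iff_forall_not_isDefect.2 fun _ hx => not_mem hx.leadsToDefect hox
  exact hA.hasSolution_of_acc_of_squaresCloseAt (hA.G_of_O hO) hleft hbottom hacc hsq

end GFC
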